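/- Let V be a vertex operator algebra such that C₁(V) has finite codimension in V. Then V is finitely generated as a vertex operator algebra. -/

import Mathlib

noncomputable section

/-- The generalized binomial coefficient `C(m, i)` for `m ∈ ℤ`, `i ∈ ℕ`,
as a complex number: `m(m-1)⋯(m-i+1)/i!`. -/
def cchoose (m : ℤ) (i : ℕ) : ℂ :=
  (∏ j ∈ Finset.range i, ((m : ℂ) - (j : ℂ))) / (Nat.factorial i : ℂ)

/-- A vertex operator algebra `V = ⊕ₙ V₍ₙ₎` over `ℂ`.  The vertex operator map is
recorded through its modes `op u n v = uₙ v` (so `Y(u,x)v = Σₙ uₙv x^{-n-1}`), with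
vacuum `one`, conformal vector `omega` (with `L(k) = ω_{k+1}`), central charge `cc`,
weight grading `wtSpace` with projections `proj`.  The Jacobi identity is recorded in
the equivalent form of the Borcherds identity on modes. -/
structure VOA where
  carrier : Type
  [grp : AddCommGroup carrier]
  [mdl : Module ℂ carrier]
  op : carrier → ℤ → carrier → carrier
  one : carrier
  omega : carrier
  wtSpace : ℤ → Submodule ℂ carrier
  proj : ℤ → carrier → carrier
  cc : ℂ
  op_linear_left : ∀ (n : ℤ) (w : carrier), IsLinearMap ℂ fun u => op u n w
  op_linear_right : ∀ (u : carrier) (n : ℤ), IsLinearMap ℂ (op u n)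
  trunc : ∀ u v : carrier, ∃ N : ℤ, ∀ n : ℤ, N ≤ n → op u n v = 0
  one_op : ∀ (n : ℤ) (v : carrier), op one n v = if n = -1 then v else 0
  create_nonneg : ∀ (v : carrier) (n : ℤ), 0 ≤ n → op v n one = 0
  create : ∀ v : carrier, op v (-1) one = v
  borcherds : ∀ (u v w : carrier) (l m n : ℤ),
    (∑ᶠ i : ℕ, cchoose m i • op (op u (l + (i : ℤ)) v) (m + n - (i : ℤ)) w)
      = ∑ᶠ i : ℕ, ((-1 : ℂ) ^ i * cchoose l i) •
          (op u (l + m - (i : ℤ)) (op v (n + (i : ℤ)) w)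
            - ((-1 : ℂ) ^ l) • op v (l + n - (i : ℤ)) (op u (m + (i : ℤ)) w))
  proj_linear : ∀ n : ℤ, IsLinearMap ℂ (proj n)
  proj_mem : ∀ (n : ℤ) (v : carrier), proj n v ∈ wtSpace n
  proj_eq : ∀ n : ℤ, ∀ v ∈ wtSpace n, proj n v = v
  proj_ne : ∀ m n : ℤ, m ≠ n → ∀ v ∈ wtSpace m, proj n v = 0
  proj_finite : ∀ v : carrier, (Function.support fun n => proj n v).Finite
  proj_sum : ∀ v : carrier, (∑ᶠ n : ℤ, proj n v) = v
  fd : ∀ n : ℤ, FiniteDimensional ℂ (wtSpace n)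
  lower_trunc : ∃ N : ℤ, ∀ n : ℤ, n < N → wtSpace n = ⊥
  one_wt : one ∈ wtSpace 0
  omega_wt : omega ∈ wtSpace 2
  op_wt : ∀ k m n : ℤ, ∀ u ∈ wtSpace k, ∀ v ∈ wtSpace m, op u n v ∈ wtSpace (k + m - n - 1)
  L_zero : ∀ n : ℤ, ∀ v ∈ wtSpace n, op omega 1 v = (n : ℂ) • v
  L_neg_one : ∀ (u : carrier) (n : ℤ) (w : carrier),
    op (op omega 0 u) n w = (-(n : ℂ)) • op u (n - 1) w
  virasoro : ∀ (m n : ℤ) (v : carrier),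
    op omega (m + 1) (op omega (n + 1) v) - op omega (n + 1) (op omega (m + 1) v)
      = ((m : ℂ) - (n : ℂ)) • op omega (m + n + 1) v
        + (if m + n = 0 then (((m : ℂ) ^ 3 - (m : ℂ)) / 12) * cc else 0) • v

attribute [instance] VOA.grp VOA.mdl

namespace VOA

variable (V : VOA)

/-- The Virasoro operator `L(k) = ω_{k+1}`. -/
def L (k : ℤ) (v : V.carrier) : V.carrier := V.op V.omega (k + 1) v

/-- The positive-weight part `V₊ = ⊕_{n ≥ 1} V₍ₙ₎`. -/
def pos : Submodule ℂ V.carrier := ⨆ (n : ℤ) (_ : 1 ≤ n), V.wtSpace n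

/-- Zhu's subspace `C₂(V) = span{u₋₂v : u, v ∈ V}`. -/
def C2 : Submodule ℂ V.carrier :=
  Submodule.span ℂ {x : V.carrier | ∃ u v : V.carrier, x = V.op u (-2) v}

/-- The subspace `C₁(V) = span(v₋₁V₊ (v ∈ V₊) together with L(-1)V)`. -/
def C1 : Submodule ℂ V.carrier :=
  Submodule.span ℂ
    ({x : V.carrier | ∃ u ∈ V.pos, ∃ v ∈ V.pos, x = V.op u (-1) v}
      ∪ {x : V.carrier | ∃ v : V.carrier, x = V.op V.omega 0 v})

/-- Iterated application of modes: `iterApply [(u¹,n₁),…,(uʳ,n_r)] w = u¹_{n₁} ⋯ uʳ_{n_r} w`. -/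
def iterApply : List (V.carrier × ℤ) → V.carrier → V.carrier
  | [], w => w
  | p :: l, w => V.op p.1 p.2 (iterApply l w)

/-- `U ⊆ V` generates `V` as a vertex operator algebra:  `V` is linearly spanned by
the elements `u¹_{n₁} ⋯ uʳ_{n_r} 1` with `uⁱ ∈ U`, `n_i ∈ ℤ`. -/
def generates (U : Set V.carrier) : Prop :=
  Submodule.span ℂ {x : V.carrier | ∃ l : List (V.carrier × ℤ),
    (∀ p ∈ l, p.1 ∈ U) ∧ x = V.iterApply l V.one} = ⊤

/-- `V` is finitely generated as a vertex operator algebra. -/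
def FinitelyGenerated : Prop := ∃ S : Finset V.carrier, V.generates ↑S

end VOA

/-- A weak `V`-module: all axioms of a module (truncation, vacuum, Jacobi identity in
Borcherds form) except those involving gradings. -/
structure WeakModule (V : VOA) where
  carrier : Type
  [grp : AddCommGroup carrier]
  [mdl : Module ℂ carrier]
  op : V.carrier → ℤ → carrier → carrier
  op_linear_left : ∀ (n : ℤ) (w : carrier), IsLinearMap ℂ fun u => op u n w
  op_linear_right : ∀ (u : V.carrier) (n : ℤ), IsLinearMap ℂ (op u n)
  trunc : ∀ (u : V.carrier) (w : carrier), ∃ N : ℤ, ∀ n : ℤ, N ≤ n → op u n w = 0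
  one_op : ∀ (n : ℤ) (w : carrier), op V.one n w = if n = -1 then w else 0
  borcherds : ∀ (u v : V.carrier) (w : carrier) (l m n : ℤ),
    (∑ᶠ i : ℕ, cchoose m i • op (V.op u (l + (i : ℤ)) v) (m + n - (i : ℤ)) w)
      = ∑ᶠ i : ℕ, ((-1 : ℂ) ^ i * cchoose l i) •
          (op u (l + m - (i : ℤ)) (op v (n + (i : ℤ)) w)
            - ((-1 : ℂ) ^ l) • op v (l + n - (i : ℤ)) (op u (m + (i : ℤ)) w))

attribute [instance] WeakModule.grp WeakModule.mdl

namespace WeakModule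

variable {V : VOA} (W : WeakModule V)

/-- `L(0)` acting on a weak module, as a linear map. -/
def L0 : W.carrier →ₗ[ℂ] W.carrier := IsLinearMap.mk' _ (W.op_linear_right V.omega 1)

/-- The `L(0)`-eigenspace of eigenvalue `h`. -/
def eig (h : ℂ) : Submodule ℂ W.carrier :=
  LinearMap.ker (W.L0 - h • (LinearMap.id : W.carrier →ₗ[ℂ] W.carrier))

/-- The coefficient `v*ₙ` of the adjoint vertex operator
`⟨Y*(v,x)α, w⟩ = ⟨α, Y(e^{xL(1)}(-x^{-2})^{L(0)}v, x^{-1})w⟩` acting on the full dual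
space: for `v` homogeneous of weight `h`,
`(v*ₙ α)(w) = (-1)^h Σ_{i≥0} (1/i!) α((L(1)^i v)_{2h-n-i-2} w)`, extended to general
`v` via the weight-space projections. -/
def dmode (v : V.carrier) (n : ℤ) (α : W.carrier → ℂ) (w : W.carrier) : ℂ :=
  ∑ᶠ h : ℤ, ∑ᶠ i : ℕ,
    ((-1 : ℂ) ^ h / (Nat.factorial i : ℂ)) *
      α (W.op ((V.L 1)^[i] (V.proj h v)) (2 * h - n - (i : ℤ) - 2) w)

/-- `D(W) ⊆ W*`: the linear functionals `α` on `W` such that for every `v ∈ V`,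
`Y*(v,x)α ∈ W*((x))`, i.e. `v*ₙ α = 0` for `n` sufficiently large. -/
def DW : Set (W.carrier → ℂ) :=
  {α | IsLinearMap ℂ α ∧
    ∀ v : V.carrier, ∃ N : ℤ, ∀ n : ℤ, N ≤ n → ∀ w : W.carrier, W.dmode v n α w = 0}

/-- A subspace stable under all modes of all vertex operators, i.e. a `V`-submodule. -/
def IsStable (S : Submodule ℂ W.carrier) : Prop :=
  ∀ (v : V.carrier) (n : ℤ), ∀ m ∈ S, W.op v n m ∈ S

/-- An irreducible (nonzero, no proper nonzero stable subspaces) `V`-submodule. -/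
def IsIrreducibleSub (S : Submodule ℂ W.carrier) : Prop :=
  S ≠ ⊥ ∧ W.IsStable S ∧
    ∀ T : Submodule ℂ W.carrier, W.IsStable T → T ≤ S → T = ⊥ ∨ T = S

/-- A stable subspace which is an ordinary module: `L(0)` acts semisimply on it with
finite-dimensional eigenspaces, and for each `h` the eigenvalues `h + m` do not occur
for `m` a sufficiently negative integer. -/
def IsOrdinarySub (S : Submodule ℂ W.carrier) : Prop :=
  S ≤ (⨆ h : ℂ, W.eig h ⊓ S) ∧ (∀ h : ℂ, FiniteDimensional ℂ ↥(W.eig h ⊓ S)) ∧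
    ∀ h : ℂ, ∃ N : ℤ, ∀ m : ℤ, m ≤ N → W.eig (h + (m : ℂ)) ⊓ S = ⊥

/-- The weak module `W` is irreducible. -/
def IsIrreducible : Prop :=
  (⊥ : Submodule ℂ W.carrier) ≠ ⊤ ∧
    ∀ S : Submodule ℂ W.carrier, W.IsStable S → S = ⊥ ∨ S = ⊤

/-- `Cₙ(W) = span{v₋ₙw : v ∈ V, w ∈ W}`. -/
def Cn (n : ℤ) : Submodule ℂ W.carrier :=
  Submodule.span ℂ {x : W.carrier | ∃ (v : V.carrier) (w : W.carrier), x = W.op v (-n) w}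

/-- `B(W) = span(u₋₁W (u ∈ V₊) together with v₀W (v homogeneous, wt v ≥ 2))`. -/
def BW : Submodule ℂ W.carrier :=
  Submodule.span ℂ
    ({x : W.carrier | ∃ v ∈ V.pos, ∃ w : W.carrier, x = W.op v (-1) w}
      ∪ {x : W.carrier | ∃ k : ℤ, 2 ≤ k ∧ ∃ v ∈ V.wtSpace k, ∃ w : W.carrier, x = W.op v 0 w})

/-- Zhu's subspace `O(W) = span{Σ_{i≥0} C(wt v, i) v_{i-2} w}` so that `A(W) = W/O(W)`. -/
def OW : Submodule ℂ W.carrier :=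
  Submodule.span ℂ
    {x : W.carrier | ∃ (k : ℤ) (v : V.carrier), v ∈ V.wtSpace k ∧
      ∃ w : W.carrier, x = ∑ᶠ i : ℕ, cchoose k i • W.op v ((i : ℤ) - 2) w}

/-- A subspace `T ⊇ O(W)` of `W` is closed under the Frenkel–Zhu left and right
`A(V)`-actions `v * w = Σᵢ C(wt v, i) v_{i-1} w` and `w * v = Σᵢ C(wt v - 1, i) v_{i-1} w`;
for `T ⊇ O(W)` this expresses that `T/O(W)` is an `A(V)`-sub-bimodule of `A(W)`. -/
def BimoduleClosed (T : Submodule ℂ W.carrier) : Prop :=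
  ∀ k : ℤ, ∀ v ∈ V.wtSpace k, ∀ w ∈ T,
    (∑ᶠ i : ℕ, cchoose k i • W.op v ((i : ℤ) - 1) w) ∈ T ∧
    (∑ᶠ i : ℕ, cchoose (k - 1) i • W.op v ((i : ℤ) - 1) w) ∈ T

/-- Equivalence (isomorphism) of weak modules. -/
def Equiv (M N : WeakModule V) : Prop :=
  ∃ e : M.carrier ≃ₗ[ℂ] N.carrier,
    ∀ (v : V.carrier) (n : ℤ) (w : M.carrier), e (M.op v n w) = N.op v n (e w)

end WeakModule

/-- `V` is of class 𝒜: `L(0)` acts semisimply on every weak `V`-module. -/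
def VOA.classA (V : VOA) : Prop :=
  ∀ M : WeakModule V, (⨆ h : ℂ, M.eig h) = ⊤

/-- `V` is regular: every weak `V`-module is a direct sum of irreducible ordinary
`V`-modules. -/
def VOA.regular (V : VOA) : Prop :=
  ∀ M : WeakModule V, ∃ (ι : Type) (S : ι → Submodule ℂ M.carrier),
    (∀ i, M.IsIrreducibleSub (S i) ∧ M.IsOrdinarySub (S i)) ∧
    (∀ i, Disjoint (S i) (⨆ (j : ι) (_ : j ≠ i), S j)) ∧ (⨆ i, S i) = ⊤

/-- A generalized `V`-module: a weak module with a semisimple `L(0)`-action, graded by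
the `L(0)`-eigenvalues, with weight-space projections `projW`. -/
structure GenModule (V : VOA) extends WeakModule V where
  wt : ℂ → Submodule ℂ carrier
  projW : ℂ → carrier → carrier
  projW_linear : ∀ h : ℂ, IsLinearMap ℂ (projW h)
  projW_mem : ∀ (h : ℂ) (w : carrier), projW h w ∈ wt h
  projW_eq : ∀ h : ℂ, ∀ w ∈ wt h, projW h w = w
  projW_ne : ∀ g h : ℂ, g ≠ h → ∀ w ∈ wt g, projW h w = 0
  projW_finite : ∀ w : carrier, (Function.support fun h => projW h w).Finite
  projW_sum : ∀ w : carrier, (∑ᶠ h : ℂ, projW h w) = w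
  wt_L0 : ∀ h : ℂ, ∀ w ∈ wt h, op V.omega 1 w = h • w
  wt_op : ∀ k : ℤ, ∀ v ∈ V.wtSpace k, ∀ (h : ℂ) (n : ℤ), ∀ w ∈ wt h,
    op v n w ∈ wt (h + (k : ℂ) - (n : ℂ) - 1)

/-- An ordinary `V`-module: a generalized module whose weight spaces are
finite-dimensional and whose weights are truncated from below in each coset `h + ℤ`. -/
structure OrdModule (V : VOA) extends GenModule V where
  wt_fd : ∀ h : ℂ, FiniteDimensional ℂ ↥(wt h)
  wt_lower : ∀ h : ℂ, ∃ N : ℤ, ∀ m : ℤ, m ≤ N → wt (h + (m : ℂ)) = ⊥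

namespace GenModule

variable {V : VOA} (W : GenModule V)

/-- `W₊ = ⊕_{Re h > 0} W₍ₕ₎`. -/
def posW : Submodule ℂ W.carrier := ⨆ (h : ℂ) (_ : 0 < h.re), W.wt h

/-- `C₁(W) = span(v₋₁W₊ (v ∈ V₊) together with L(-1)W)`. -/
def C1W : Submodule ℂ W.carrier :=
  Submodule.span ℂ
    ({x : W.carrier | ∃ v ∈ V.pos, ∃ w ∈ W.posW, x = W.op v (-1) w}
      ∪ {x : W.carrier | ∃ w : W.carrier, x = W.op V.omega 0 w})

/-- The restricted dual `W' = ⊕ₕ W₍ₕ₎* ⊆ W*`: the linear functionals vanishing on all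
but finitely many weight spaces. -/
def restrictedDual : Set (W.carrier → ℂ) :=
  {α | IsLinearMap ℂ α ∧ {h : ℂ | ∃ w ∈ W.wt h, α w ≠ 0}.Finite}

end GenModule

/-- `D(W)⁰`: the sum of the `L(0)`-eigenspaces of the weak module `D(W) ⊆ W*`, where
`L*(0) = ω*₁` acts on `α ∈ W*` by `(L*(0)α)(w) = α(L(0)w)`. -/
def OrdModule.DW0 {V : VOA} (W : OrdModule V) : Set (W.carrier → ℂ) :=
  {α | ∃ (S : Finset ℂ) (f : ℂ → (W.carrier → ℂ)),
    (∀ h ∈ S, f h ∈ W.toWeakModule.DW ∧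
      ∀ w : W.carrier, f h (W.op V.omega 1 w) = h * f h w) ∧
    α = ∑ h ∈ S, f h}

/-- An ℕ-gradable weak `V`-module: a weak module with an ℕ-grading
`W = ⊕_{n∈ℕ} W(n)` with `v_m W(n) ⊆ W(wt v + n - m - 1)` (graded pieces of negative
index are zero). -/
structure NGradedModule (V : VOA) extends WeakModule V where
  gr : ℤ → Submodule ℂ carrier
  gr_neg : ∀ n : ℤ, n < 0 → gr n = ⊥
  gr_sup : (⨆ n : ℤ, gr n) = ⊤
  gr_indep : ∀ n : ℤ, Disjoint (gr n) (⨆ (m : ℤ) (_ : m ≠ n), gr m)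
  gr_op : ∀ k : ℤ, ∀ v ∈ V.wtSpace k, ∀ m n : ℤ, ∀ w ∈ gr n,
    op v m w ∈ gr (k + n - m - 1)

/-- An intertwining operator of type `(W₃; W₁ W₂)` in the sense of
Frenkel–Huang–Lepowsky, recorded through its complex-indexed modes
`I w₁ h w₂ = (w₁)ₕ w₂` (so `Y(w₁,x)w₂ = Σ_{h∈ℂ} (w₁)ₕ w₂ x^{-h-1}`):
linearity, truncation, the `L(-1)`-derivative property, and the Jacobi identity in
component (Borcherds) form. -/
def IsIntertwiner {V : VOA} (W1 W2 W3 : OrdModule V)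
    (I : W1.carrier → ℂ → W2.carrier → W3.carrier) : Prop :=
  (∀ (h : ℂ) (w2 : W2.carrier), IsLinearMap ℂ fun w1 => I w1 h w2) ∧
  (∀ (w1 : W1.carrier) (h : ℂ), IsLinearMap ℂ (I w1 h)) ∧
  (∀ (w1 : W1.carrier) (w2 : W2.carrier) (h : ℂ),
    ∃ N : ℤ, ∀ n : ℤ, N ≤ n → I w1 (h + (n : ℂ)) w2 = 0) ∧
  (∀ (w1 : W1.carrier) (h : ℂ) (w2 : W2.carrier),
    I (W1.op V.omega 0 w1) h w2 = (-h) • I w1 (h - 1) w2) ∧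
  (∀ (u : V.carrier) (w1 : W1.carrier) (w2 : W2.carrier) (l m : ℤ) (h : ℂ),
    (∑ᶠ i : ℕ, cchoose m i • I (W1.op u (l + (i : ℤ)) w1) ((m : ℂ) + h - (i : ℂ)) w2)
      = ∑ᶠ i : ℕ, ((-1 : ℂ) ^ i * cchoose l i) •
          (W3.op u (l + m - (i : ℤ)) (I w1 (h + (i : ℂ)) w2)
            - ((-1 : ℂ) ^ l) • I w1 ((l : ℂ) + h - (i : ℂ)) (W2.op u (m + (i : ℤ)) w2)))

/-- The fusion rule `dim I(W₃; W₁W₂)` is finite: the space of intertwining operators of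
the indicated type is finite-dimensional. -/
def FusionFinite {V : VOA} (W1 W2 W3 : OrdModule V) : Prop :=
  FiniteDimensional ℂ
    ↥(Submodule.span ℂ {I : W1.carrier → ℂ → W2.carrier → W3.carrier |
        IsIntertwiner W1 W2 W3 I})

end

/-!
The span `G` of the iterated modes of a set `U` applied to the vacuum is a vertex subalgebra:
the Borcherds identity with `m = 0` expresses `(u_l v)_n` through products of modes of `u` and of
`v`, so the vectors whose modes preserve `G` are closed under all products, and they contain `U`.

Suppose that `U` consists of homogeneous vectors and spans `V` modulo `C₁(V)`. Then `V₍ₙ₎ ⊆ G` by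
induction on `n`, starting below the lowest weight: the weight-`n` part of `C₁(V)` is spanned by
products `u₋₁v` of vectors of positive weights adding up to `n`, hence of weights less than `n`, and
by vectors `L(-1)v = v₋₂1` with `v` of weight `n - 1`. If `C₁(V)` has finite codimension, the
homogeneous components of finitely many vectors spanning a complement form such a set `U`.
-/

theorem finsum_mem_of_forall_mem {M S ι : Type*} [AddCommMonoid M] [SetLike S M]
    [AddSubmonoidClass S M] {G : S} {f : ι → M} (hf : ∀ i, f i ∈ G) : ∑ᶠ i, f i ∈ G :=
  finsum_induction (· ∈ G) (zero_mem G) (fun _ _ ↦ add_mem) hf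

theorem cchoose_zero_right (m : ℤ) : cchoose m 0 = 1 := by simp [cchoose]

theorem cchoose_zero_left {i : ℕ} (hi : i ≠ 0) : cchoose 0 i = 0 := by
  have hprod : ∏ j ∈ Finset.range i, (((0 : ℤ) : ℂ) - j) = 0 :=
    Finset.prod_eq_zero (Finset.mem_range.2 (Nat.pos_of_ne_zero hi)) (by simp)
  rw [cchoose, hprod, zero_div]

namespace VOA

variable {V : VOA}

theorem op_op_eq_finsum (u v w : V.carrier) (l n : ℤ) :
    V.op (V.op u l v) n w = ∑ᶠ i : ℕ, ((-1 : ℂ) ^ i * cchoose l i) •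
      (V.op u (l - i) (V.op v (n + i) w) - (-1 : ℂ) ^ l • V.op v (l + n - i) (V.op u i w)) := by
  have hBorcherds := V.borcherds u v w l 0 n
  rw [finsum_eq_single _ 0 fun i hi ↦ by rw [cchoose_zero_left hi, zero_smul]] at hBorcherds
  simpa [cchoose_zero_right] using hBorcherds

theorem op_omega_zero (v : V.carrier) : V.op V.omega 0 v = V.op v (-2) V.one := by
  simpa [V.create] using V.L_neg_one v (-1) V.one

variable (V) in
/-- The product `(u, v) ↦ uₙv` of the vertex algebra `V` as a bilinear map. -/
def mode (n : ℤ) : V.carrier →ₗ[ℂ] V.carrier →ₗ[ℂ] V.carrier :=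
  LinearMap.mk₂ ℂ (fun u v ↦ V.op u n v)
    (fun u u' v ↦ (V.op_linear_left n v).map_add u u')
    (fun c u v ↦ (V.op_linear_left n v).map_smul c u)
    (fun u ↦ (V.op_linear_right u n).map_add)
    (fun c u ↦ (V.op_linear_right u n).map_smul c)

/-- A vertex subalgebra: a subspace containing the vacuum and closed under all products `uₙv`.
It need not contain the conformal vector. -/
structure IsVertexSubalgebra (G : Submodule ℂ V.carrier) : Prop where
  one_mem : V.one ∈ G
  op_mem : ∀ u ∈ G, ∀ n : ℤ, ∀ v ∈ G, V.op u n v ∈ G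

/-- The subspace of all vectors whose modes preserve `G`. It serves to show that the subspace
generated by a set is closed under all products. -/
def modeStabilizer (G : Submodule ℂ V.carrier) : Submodule ℂ V.carrier where
  carrier := {u | ∀ n : ℤ, ∀ w ∈ G, V.mode n u w ∈ G}
  add_mem' hu hv n w hw := by simpa using G.add_mem (hu n w hw) (hv n w hw)
  zero_mem' n w _ := by simp
  smul_mem' c u hu n w hw := by simpa using G.smul_mem c (hu n w hw)

theorem isVertexSubalgebra_modeStabilizer (G : Submodule ℂ V.carrier) :
    IsVertexSubalgebra (modeStabilizer G) where
  one_mem n w hw := by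
    change V.op V.one n w ∈ G
    rw [V.one_op]
    split_ifs
    exacts [hw, G.zero_mem]
  op_mem u hu l v hv n w hw := by
    change V.op (V.op u l v) n w ∈ G
    rw [op_op_eq_finsum]
    exact finsum_mem_of_forall_mem fun i ↦ G.smul_mem _ <|
      G.sub_mem (hu _ _ (hv _ _ hw)) (G.smul_mem _ (hv _ _ (hu _ _ hw)))

/-- The subspace spanned by the vectors `u¹_{n₁} ⋯ uʳ_{n_r} 1` with `uⁱ ∈ U`; that `U` generates
`V` means by definition that it is everything. -/
def modeSpan (U : Set V.carrier) : Submodule ℂ V.carrier :=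
  Submodule.span ℂ {x | ∃ l : List (V.carrier × ℤ), (∀ p ∈ l, p.1 ∈ U) ∧ x = V.iterApply l V.one}

theorem one_mem_modeSpan (U : Set V.carrier) : V.one ∈ modeSpan U :=
  Submodule.subset_span ⟨[], by simp, rfl⟩

theorem subset_modeStabilizer_modeSpan (U : Set V.carrier) :
    U ⊆ modeStabilizer (modeSpan U) := by
  intro u hu n w hw
  suffices modeSpan U ≤ (modeSpan U).comap (V.mode n u) from this hw
  refine Submodule.span_le.2 ?_
  rintro _ ⟨l, hl, rfl⟩
  exact Submodule.subset_span ⟨(u, n) :: l, List.forall_mem_cons.2 ⟨hu, hl⟩, rfl⟩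

theorem subset_modeSpan (U : Set V.carrier) : U ⊆ modeSpan U := by
  intro u hu
  rw [← V.create u]
  exact subset_modeStabilizer_modeSpan U hu (-1) V.one (one_mem_modeSpan U)

theorem IsVertexSubalgebra.iterApply_mem {G : Submodule ℂ V.carrier} (hG : IsVertexSubalgebra G)
    {l : List (V.carrier × ℤ)} (hl : ∀ p ∈ l, p.1 ∈ G) : V.iterApply l V.one ∈ G := by
  induction l with
  | nil => exact hG.one_mem
  | cons p l ih =>
    rw [List.forall_mem_cons] at hl
    exact hG.op_mem p.1 hl.1 p.2 _ (ih hl.2)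

theorem IsVertexSubalgebra.modeSpan_le {G : Submodule ℂ V.carrier} (hG : IsVertexSubalgebra G)
    {U : Set V.carrier} (hU : U ⊆ G) : modeSpan U ≤ G := by
  refine Submodule.span_le.2 ?_
  rintro _ ⟨l, hl, rfl⟩
  exact hG.iterApply_mem fun p hp ↦ hU (hl p hp)

theorem isVertexSubalgebra_modeSpan (U : Set V.carrier) : IsVertexSubalgebra (modeSpan U) where
  one_mem := one_mem_modeSpan U
  op_mem _ hu :=
    (isVertexSubalgebra_modeStabilizer _).modeSpan_le (subset_modeStabilizer_modeSpan U) hu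

variable (V) in
/-- The projection of `V` onto the weight space `V₍ₙ₎` as a linear map. -/
def projₗ (n : ℤ) : V.carrier →ₗ[ℂ] V.carrier := IsLinearMap.mk' _ (V.proj_linear n)

theorem proj_mem_of_mem_wtSpace {G : Submodule ℂ V.carrier} {k n : ℤ} {v : V.carrier}
    (hv : v ∈ V.wtSpace k) (hG : k = n → v ∈ G) : V.proj n v ∈ G := by
  rcases eq_or_ne k n with rfl | hkn
  · rw [V.proj_eq k v hv]
    exact hG rfl
  · rw [V.proj_ne k n hkn v hv]
    exact G.zero_mem

variable (V) in
theorem iSup_wtSpace : ⨆ n, V.wtSpace n = ⊤ := by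
  refine eq_top_iff.2 fun v _ ↦ ?_
  rw [← V.proj_sum v]
  exact finsum_mem_of_forall_mem fun n ↦ Submodule.mem_iSup_of_mem n (V.proj_mem n v)

theorem exists_homogeneous_finset_le_span {Q : Submodule ℂ V.carrier} (hQ : Q.FG) :
    ∃ S : Finset V.carrier, (∀ u ∈ S, SetLike.IsHomogeneousElem V.wtSpace u) ∧
      Q ≤ Submodule.span ℂ S := by
  obtain ⟨T, rfl⟩ := hQ
  let components : Set V.carrier := ⋃ t ∈ T, Set.range fun n ↦ V.proj n t
  have hfinite : components.Finite := T.finite_toSet.biUnion fun t _ ↦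
    (((V.proj_finite t).image _).insert 0).subset (Function.range_subset_insert_image_support _)
  refine ⟨hfinite.toFinset, fun u hu ↦ ?_, Submodule.span_le.2 fun t ht ↦ ?_⟩
  · obtain ⟨t, -, n, rfl⟩ := Set.mem_iUnion₂.1 (hfinite.mem_toFinset.1 hu)
    exact ⟨n, V.proj_mem n t⟩
  · rw [hfinite.coe_toFinset, ← V.proj_sum t]
    exact finsum_mem_of_forall_mem fun n ↦
      Submodule.subset_span (Set.mem_biUnion ht (Set.mem_range_self n))

theorem C1_le {G : Submodule ℂ V.carrier}
    (hmul : ∀ k m, 1 ≤ k → 1 ≤ m → ∀ u ∈ V.wtSpace k, ∀ v ∈ V.wtSpace m, V.op u (-1) v ∈ G)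
    (hL : ∀ m, ∀ v ∈ V.wtSpace m, V.op V.omega 0 v ∈ G) : V.C1 ≤ G := by
  have hpos : Submodule.map₂ (V.mode (-1)) V.pos V.pos ≤ G := by
    simp only [pos, Submodule.map₂_iSup_left, Submodule.map₂_iSup_right, iSup_le_iff,
      Submodule.map₂_le]
    exact fun m hm k hk u hu v hv ↦ hmul k m hk hm u hu v hv
  have hrange : ⨆ m, V.wtSpace m ≤ G.comap (V.mode 0 V.omega) := iSup_le hL
  refine Submodule.span_le.2 ?_
  rintro _ (⟨u, hu, v, hv, rfl⟩ | ⟨v, rfl⟩)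
  · exact Submodule.map₂_le.1 hpos u hu v hv
  · exact hrange (V.iSup_wtSpace ▸ Submodule.mem_top)

namespace IsVertexSubalgebra

variable {G : Submodule ℂ V.carrier}

theorem C1_le_comap_projₗ (hG : IsVertexSubalgebra G) {n : ℤ}
    (hlt : ∀ k < n, V.wtSpace k ≤ G) : V.C1 ≤ G.comap (V.projₗ n) := by
  refine C1_le (fun k m hk hm u hu v hv ↦ ?_) fun m v hv ↦ ?_
  · refine proj_mem_of_mem_wtSpace (V.op_wt k m (-1) u hu v hv) fun hkm ↦ ?_
    exact hG.op_mem u (hlt k (by lia) hu) _ v (hlt m (by lia) hv)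
  · refine proj_mem_of_mem_wtSpace (V.op_wt 2 m 0 _ V.omega_wt v hv) fun hm ↦ ?_
    rw [op_omega_zero]
    exact hG.op_mem v (hlt m (by lia) hv) _ _ hG.one_mem

theorem eq_top_of_span_sup_C1_eq_top (hG : IsVertexSubalgebra G) {U : Set V.carrier}
    (hUG : U ⊆ G) (hU : ∀ u ∈ U, SetLike.IsHomogeneousElem V.wtSpace u)
    (htop : Submodule.span ℂ U ⊔ V.C1 = ⊤) : G = ⊤ := by
  obtain ⟨N, hN⟩ := V.lower_trunc
  have hspan (n : ℤ) : Submodule.span ℂ U ≤ G.comap (V.projₗ n) := by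
    refine Submodule.span_le.2 fun u hu ↦ ?_
    obtain ⟨k, hk⟩ := hU u hu
    exact proj_mem_of_mem_wtSpace hk fun _ ↦ hUG hu
  have hwt (n : ℤ) : V.wtSpace n ≤ G := by
    induction n using Int.strongRec (m := N) with
    | lt n hn => simp [hN n hn]
    | ge n _ ih =>
      have hproj : ⊤ ≤ G.comap (V.projₗ n) :=
        htop ▸ sup_le (hspan n) (hG.C1_le_comap_projₗ ih)
      intro v hv
      rw [← V.proj_eq n v hv]
      exact hproj Submodule.mem_top
  exact eq_top_iff.2 (V.iSup_wtSpace ▸ iSup_le hwt)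

end IsVertexSubalgebra

theorem generates_of_span_sup_C1_eq_top {U : Set V.carrier}
    (hU : ∀ u ∈ U, SetLike.IsHomogeneousElem V.wtSpace u)
    (htop : Submodule.span ℂ U ⊔ V.C1 = ⊤) : V.generates U :=
  (isVertexSubalgebra_modeSpan U).eq_top_of_span_sup_C1_eq_top (subset_modeSpan U) hU htop

end VOA

/-- If `C₁(V)` has finite codimension in `V`, then `V` is finitely
generated as a vertex operator algebra. -/
theorem finitelyGenerated_of_C1_finite_codim (V : VOA)
    (h : FiniteDimensional ℂ (V.carrier ⧸ V.C1)) :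
    V.FinitelyGenerated := by
  obtain ⟨Q, hQ⟩ := Submodule.exists_isCompl V.C1
  have hQ_fg : Q.FG := Submodule.CoFG.fg_of_isCompl hQ h
  obtain ⟨S, hS, hQS⟩ := VOA.exists_homogeneous_finset_le_span hQ_fg
  exact ⟨S, VOA.generates_of_span_sup_C1_eq_top hS (hQ.symm.codisjoint.mono_left hQS).eq_top⟩
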